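/- Let J ⊆ ℝ be an interval with base point s₀ ∈ J, and let σ : J → ℂ be a C¹ curve with σ(y) ≠ 0 and Im(conj(σ(y))·σ'(y)) > 0 for all y ∈ J (so that β_σ is strictly increasing). Define F̌_d : ℝ × J → ℂ² by F̌_d(x,y) := (x·σ(y), (1/2)(|σ(y)|² − x²) + i·β_σ(y)). Then F̌_d is injective, and F̌_d(−x, y) = (−(F̌_d)₁(x,y), (F̌_d)₂(x,y)) for all (x,y), i.e. F̌_d intertwines the reflection x ↦ −x of the domain with the C₂-action (z₁, z₂) ↦ (−z₁, z₂) on ℂ². (This is the key injectivity underlying the embeddedness of the SO(m−1)-invariant translating soliton L_{(d)}, where σ is the profile curve of an Anciaux shrinker.) -/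

import Mathlib

open Complex

/-- The primitive `β_σ` of the pullback of the Liouville form by a curve `σ`. -/
noncomputable def beta (σ σ' : ℝ → ℂ) (s₀ s : ℝ) : ℝ :=
  ∫ t in s₀..s, ((starRingEnd ℂ) (σ t) * σ' t).im

/-- The profile surface `F̌_d(x,y) = (x·σ(y), (1/2)(|σ(y)|² − x²) + i·β_σ(y))`. -/
noncomputable def Fd (σ σ' : ℝ → ℂ) (s₀ : ℝ) (x y : ℝ) : ℂ × ℂ :=
  ((x : ℂ) * σ y,
    ((1 / 2 * (‖σ y‖ ^ 2 - x ^ 2) : ℝ) : ℂ)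
      + Complex.I * ((beta σ σ' s₀ y : ℝ) : ℂ))

theorem strictMonoOn_intervalIntegral_of_interior_pos {J : Set ℝ} (hJ : J.OrdConnected)
    {s₀ : ℝ} {f : ℝ → ℝ} (hf : ∀ s ∈ J, IntervalIntegrable f MeasureTheory.volume s₀ s)
    (hpos : ∀ t ∈ interior J, 0 < f t) :
    StrictMonoOn (fun s => ∫ t in s₀..s, f t) J := by
  intro a ha b hb hab
  have hIoo : Set.Ioo a b ⊆ interior J :=
    interior_maximal (Set.Ioo_subset_Icc_self.trans (hJ.out ha hb)) isOpen_Ioo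
  rw [← sub_pos, intervalIntegral.integral_interval_sub_left (hf b hb) (hf a ha)]
  exact intervalIntegral.intervalIntegral_pos_of_pos_on ((hf a ha).symm.trans (hf b hb))
    (fun t ht => hpos t (hIoo ht)) hab

theorem strictMonoOn_beta {J : Set ℝ} (hJ : J.OrdConnected) {s₀ : ℝ} (hs₀ : s₀ ∈ J)
    {σ σ' : ℝ → ℂ} (hσ : ContinuousOn σ J) (hσ' : ContinuousOn σ' J)
    (hpos : ∀ y ∈ interior J, 0 < ((starRingEnd ℂ) (σ y) * σ' y).im) :
    StrictMonoOn (beta σ σ' s₀) J := by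
  have hcont : ContinuousOn (fun t => ((starRingEnd ℂ) (σ t) * σ' t).im) J := by fun_prop
  exact strictMonoOn_intervalIntegral_of_interior_pos hJ
    (fun s hs => (hcont.mono (hJ.uIcc_subset hs₀ hs)).intervalIntegrable) hpos

theorem Fd_snd_im (σ σ' : ℝ → ℂ) (s₀ x y : ℝ) : (Fd σ σ' s₀ x y).2.im = beta σ σ' s₀ y := by
  simp only [Fd, add_im, ofReal_im, I_mul_im, ofReal_re, zero_add]

theorem Fd_neg (σ σ' : ℝ → ℂ) (s₀ x y : ℝ) :
    Fd σ σ' s₀ (-x) y = (-(Fd σ σ' s₀ x y).1, (Fd σ σ' s₀ x y).2) := by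
  simp only [Fd, ofReal_neg, neg_mul, neg_sq]

theorem injOn_Fd_of_injOn_beta {σ σ' : ℝ → ℂ} {s₀ : ℝ} {S : Set ℝ}
    (hβ : Set.InjOn (beta σ σ' s₀) S) (hσ : ∀ y ∈ S, σ y ≠ 0) :
    Set.InjOn (fun p : ℝ × ℝ => Fd σ σ' s₀ p.1 p.2) (Set.univ ×ˢ S) := by
  -- The height `Im z₂ = β_σ(y)` recovers `y`, after which `z₁ = x·σ(y)` recovers `x`.
  rintro ⟨x₁, y₁⟩ ⟨-, hy₁⟩ ⟨x₂, y₂⟩ ⟨-, hy₂⟩ hF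
  have hy : y₁ = y₂ := hβ hy₁ hy₂ <| by
    simpa only [Fd_snd_im] using congrArg (fun z : ℂ × ℂ => z.2.im) hF
  subst hy
  have hx : (x₁ : ℂ) * σ y₁ = x₂ * σ y₁ := congrArg Prod.fst hF
  rw [ofReal_injective (mul_right_cancel₀ (hσ y₁ hy₁) hx)]

theorem Fd_injective_and_C2_equivariant_general
    (J : Set ℝ) (hJ : J.OrdConnected) (s₀ : ℝ) (hs₀ : s₀ ∈ J)
    (σ σ' : ℝ → ℂ)
    (hσ : ∀ y ∈ J, HasDerivWithinAt σ (σ' y) J y)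
    (hσ'c : ContinuousOn σ' J)
    (hσ0 : ∀ y ∈ J, σ y ≠ 0)
    (hpos : ∀ y ∈ interior J, 0 < ((starRingEnd ℂ) (σ y) * σ' y).im) :
    Set.InjOn (fun p : ℝ × ℝ => Fd σ σ' s₀ p.1 p.2) ((Set.univ : Set ℝ) ×ˢ J) ∧
    (∀ x y : ℝ, Fd σ σ' s₀ (-x) y = (-(Fd σ σ' s₀ x y).1, (Fd σ σ' s₀ x y).2)) := by
  have hσc : ContinuousOn σ J := fun y hy => (hσ y hy).continuousWithinAt
  have hβ : StrictMonoOn (beta σ σ' s₀) J := strictMonoOn_beta hJ hs₀ hσc hσ'c hpos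
  exact ⟨injOn_Fd_of_injOn_beta hβ.injOn hσ0, Fd_neg σ σ' s₀⟩

/-- If `σ` is a nonvanishing C¹ curve on an interval `J` with
`Im(conj(σ)·σ') > 0` on `J` (so `β_σ` is strictly increasing), then `F̌_d` is injective
on `ℝ × J`, and intertwines the reflection `x ↦ −x` of the domain with the `C₂`-action
`(z₁, z₂) ↦ (−z₁, z₂)` on `ℂ²`. This is the key injectivity underlying the embeddedness
of the `SO(m−1)`-invariant translating soliton `L_{(d)}`. -/
theorem Fd_injective_and_C2_equivariant
    (J : Set ℝ) (hJ : J.OrdConnected) (s₀ : ℝ) (hs₀ : s₀ ∈ J)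
    (σ σ' : ℝ → ℂ)
    (hσ : ∀ y ∈ J, HasDerivAt σ (σ' y) y)
    (hσ'c : ContinuousOn σ' J)
    (hσ0 : ∀ y ∈ J, σ y ≠ 0)
    (hpos : ∀ y ∈ J, 0 < ((starRingEnd ℂ) (σ y) * σ' y).im) :
    Set.InjOn (fun p : ℝ × ℝ => Fd σ σ' s₀ p.1 p.2) ((Set.univ : Set ℝ) ×ˢ J) ∧
    (∀ x y : ℝ, Fd σ σ' s₀ (-x) y = (-(Fd σ σ' s₀ x y).1, (Fd σ σ' s₀ x y).2)) :=
  Fd_injective_and_C2_equivariant_general J hJ s₀ hs₀ σ σ' (fun y hy => (hσ y hy).hasDerivWithinAt)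
    hσ'c hσ0 fun y hy => hpos y (interior_subset hy)
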